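/- Let V : ℝ^d → ℝ be smooth and b, ν : ℝ^d → ℝ^d be smooth vector fields satisfying the confining assumption: there exist a constant C > 0 and a compact set K ⊂ ℝ^d such that V ≥ −C on ℝ^d, |∇V(x)| ≥ 1/C and ‖Hess V(x)‖ ≤ C|∇V(x)|² for all x ∉ K, and |b(x)| + |ν(x)| ≤ C(1 + |∇V(x)|) for all x ∈ ℝ^d. Then there exist C' > 0 and h_0 ∈ (0,1] such that for every h ∈ (0,h_0] and every compactly supported smooth u : ℝ^d → ℂ, ‖⟨b_h, d_φu⟩‖²_{L²(ℝ^d)} ≤ C'·‖Δ_φu‖_{L²(ℝ^d)}·(‖Δ_φu‖_{L²(ℝ^d)} + ‖u‖_{L²(ℝ^d)}). -/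

import Mathlib

/-!
The proof is a Bochner-type argument for the twisted derivatives `D_i = h∂_i + a_i`, where
`a_i = ∂_iV/2`, and their formal adjoints `D_i^* = -h∂_i + a_i`. They satisfy
`Δ_φ = ∑ D_i^* D_i`, `[D_i, D_j] = 0` and `[D_i, D_j^*] = h ∂_i∂_jV`.

Write `v_i = D_i u`. Integrating by parts twice and commuting (`bochner_identity`),
`‖Δ_φ u‖² = ∑_{i,j} ‖D_j v_i‖² + h ∑_{i,j} ∫ ∂_i∂_jV Re(v̄_i v_j)`,
while `‖D_j f‖² = ‖D_j^* f‖² - h ∫ ∂_j²V |f|²` and the parallelogram law give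
`∫ (a_j² - h ∂_j²V/2)|f|² ≤ ‖D_j f‖²` (`weight_le`). The Hessian is bounded by a multiple of
`1 + |∇V|²` everywhere (by hypothesis off `K`, by compactness on `K`), so for small `h` its
contribution is absorbed, and `∫ |∇φ|²|d_φu|² ≤ 2‖Δ_φu‖² + ‖d_φu‖²` (`weighted_bound`). Since
`‖d_φu‖² = ⟨Δ_φu, u⟩ ≤ ‖Δ_φu‖‖u‖` and `|b_h|² ≲ 1 + |∇φ|²`, the estimate follows.
-/

open MeasureTheory

/-- Partial derivative `∂_i f` of a real-valued function on `ℝ^d`. -/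
noncomputable def pdR {d : ℕ} (f : (Fin d → ℝ) → ℝ) (i : Fin d) : (Fin d → ℝ) → ℝ :=
  fun x => fderiv ℝ f x (Pi.single i 1)

/-- Partial derivative `∂_i u` of a complex-valued function on `ℝ^d`. -/
noncomputable def pdC {d : ℕ} (u : (Fin d → ℝ) → ℂ) (i : Fin d) : (Fin d → ℝ) → ℂ :=
  fun x => fderiv ℝ u x (Pi.single i 1)

/-- Euclidean gradient `∇V` of a real-valued function. -/
noncomputable def gradV {d : ℕ} (V : (Fin d → ℝ) → ℝ) (x : Fin d → ℝ) : Fin d → ℝ :=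
  fun i => pdR V i x

/-- Laplacian `Δu` of a complex-valued function. -/
noncomputable def lapC {d : ℕ} (u : (Fin d → ℝ) → ℂ) : (Fin d → ℝ) → ℂ :=
  fun x => ∑ i, pdC (pdC u i) i x

/-- Euclidean divergence of a vector field on `ℝ^d`. -/
noncomputable def divg {d : ℕ} (w : (Fin d → ℝ) → Fin d → ℝ) : (Fin d → ℝ) → ℝ :=
  fun x => ∑ i, pdR (fun y => w y i) i x

/-- Hessian matrix of `V`, with entries `∂_i ∂_j V(x)`. -/
noncomputable def hessM {d : ℕ} (V : (Fin d → ℝ) → ℝ) (x : Fin d → ℝ) :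
    Matrix (Fin d) (Fin d) ℝ :=
  fun i j => pdR (pdR V j) i x

/-- Euclidean norm of a vector of `ℝ^d`. -/
noncomputable def enorm2 {d : ℕ} (w : Fin d → ℝ) : ℝ :=
  Real.sqrt (∑ i, w i ^ 2)

/-- The twisted derivative `d_φ u = h∇u + u∇φ`, `φ = V/2`, in direction `i`. -/
noncomputable def dphiC {d : ℕ} (h : ℝ) (V : (Fin d → ℝ) → ℝ) (u : (Fin d → ℝ) → ℂ)
    (i : Fin d) : (Fin d → ℝ) → ℂ :=
  fun x => (h : ℂ) * pdC u i x + u x * ((gradV V x i / 2 : ℝ) : ℂ)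

/-- The semiclassical Witten Laplacian `Δ_φ u = −h²Δu + (|∇φ|² − hΔφ)u`, `φ = V/2`. -/
noncomputable def wittenC {d : ℕ} (h : ℝ) (V : (Fin d → ℝ) → ℝ) (u : (Fin d → ℝ) → ℂ) :
    (Fin d → ℝ) → ℂ :=
  fun x => -((h ^ 2 : ℝ) : ℂ) * lapC u x +
    (((∑ i, (gradV V x i / 2) ^ 2) - h * (divg (gradV V) x / 2) : ℝ) : ℂ) * u x

/-- The operator `P_φ u = Δ_φ u + ⟨b_h, d_φ u⟩`, `b_h = b + hν`. -/
noncomputable def PphiC {d : ℕ} (h : ℝ) (V : (Fin d → ℝ) → ℝ)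
    (b ν : (Fin d → ℝ) → Fin d → ℝ) (u : (Fin d → ℝ) → ℂ) : (Fin d → ℝ) → ℂ :=
  fun x => wittenC h V u x + ∑ i, ((b x i + h * ν x i : ℝ) : ℂ) * dphiC h V u i x

/-- `L²` norm (w.r.t. Lebesgue measure) of a complex-valued function on `ℝ^d`. -/
noncomputable def l2norm {d : ℕ} (f : (Fin d → ℝ) → ℂ) : ℝ :=
  Real.sqrt (∫ x : Fin d → ℝ, Complex.normSq (f x))


open ComplexConjugate

/-! ### Test functions and integration by parts -/

/-- Smooth compactly supported complex-valued functions. -/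
structure IsTest {d : ℕ} (f : (Fin d → ℝ) → ℂ) : Prop where
  smooth : ContDiff ℝ (⊤ : ℕ∞) f
  supp : HasCompactSupport f

/-- The complex `L²` pairing, antilinear in the first variable. -/
noncomputable def ip {d : ℕ} (f g : (Fin d → ℝ) → ℂ) : ℂ := ∫ x, conj (f x) * g x

/-- The formal adjoint `D_i^* f = -h∂_i f + f ∂_iφ`, `φ = V/2`, of `dphiC h V · i`. -/
noncomputable def dstar {d : ℕ} (h : ℝ) (V : (Fin d → ℝ) → ℝ) (u : (Fin d → ℝ) → ℂ)
    (i : Fin d) : (Fin d → ℝ) → ℂ :=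
  fun x => -(h : ℂ) * pdC u i x + u x * ((gradV V x i / 2 : ℝ) : ℂ)

section
variable {d : ℕ} {f g : (Fin d → ℝ) → ℂ} {V : (Fin d → ℝ) → ℝ} {h : ℝ}

lemma contDiff_pdR (hV : ContDiff ℝ (⊤ : ℕ∞) V) (i : Fin d) :
    ContDiff ℝ (⊤ : ℕ∞) (pdR V i) :=
  (hV.fderiv_right (m := (⊤ : ℕ∞)) le_rfl).clm_apply contDiff_const

lemma contDiff_pdC (hf : ContDiff ℝ (⊤ : ℕ∞) f) (i : Fin d) :
    ContDiff ℝ (⊤ : ℕ∞) (pdC f i) :=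
  (hf.fderiv_right (m := (⊤ : ℕ∞)) le_rfl).clm_apply contDiff_const

lemma contDiff_gradV_half (hV : ContDiff ℝ (⊤ : ℕ∞) V) (i : Fin d) :
    ContDiff ℝ (⊤ : ℕ∞) (fun x => ((gradV V x i / 2 : ℝ) : ℂ)) :=
  Complex.ofRealCLM.contDiff.comp ((contDiff_pdR hV i).div_const 2)

lemma contDiff_hessM (hV : ContDiff ℝ (⊤ : ℕ∞) V) (i j : Fin d) :
    ContDiff ℝ (⊤ : ℕ∞) (fun x => hessM V x i j) :=
  contDiff_pdR (contDiff_pdR hV j) i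

lemma IsTest.pd (hf : IsTest f) (i : Fin d) : IsTest (pdC f i) :=
  ⟨contDiff_pdC hf.smooth i, hf.supp.fderiv_apply ℝ _⟩

lemma IsTest.add (hf : IsTest f) (hg : IsTest g) : IsTest (fun x => f x + g x) :=
  ⟨hf.smooth.add hg.smooth, hf.supp.add hg.supp⟩

lemma IsTest.mul_smooth (hf : IsTest f) (hg : ContDiff ℝ (⊤ : ℕ∞) g) :
    IsTest (fun x => g x * f x) :=
  ⟨hg.mul hf.smooth, hf.supp.mul_left⟩

lemma IsTest.conj (hf : IsTest f) : IsTest (fun x => conj (f x)) :=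
  ⟨Complex.conjCLE.contDiff.comp hf.smooth, hf.supp.comp_left (g := fun z => conj z) (by simp)⟩

lemma IsTest.sum {F : Fin d → (Fin d → ℝ) → ℂ} (hF : ∀ i, IsTest (F i)) :
    IsTest (fun x => ∑ i, F i x) := by
  have key : ∀ s : Finset (Fin d), IsTest (fun x => ∑ i ∈ s, F i x) := by
    intro s
    induction s using Finset.induction_on with
    | empty => exact ⟨by simpa using contDiff_const, by
        simp only [Finset.sum_empty]
        exact HasCompactSupport.zero⟩
    | insert a s ha ih =>
      simp only [Finset.sum_insert ha]
      exact (hF a).add ih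
  exact key _

lemma IsTest.integrable (hf : IsTest f) : Integrable f :=
  hf.smooth.continuous.integrable_of_hasCompactSupport hf.supp

lemma IsTest.dphi (hV : ContDiff ℝ (⊤ : ℕ∞) V) (hf : IsTest f) (i : Fin d) :
    IsTest (dphiC h V f i) := by
  unfold dphiC
  simp only [mul_comm (f _)]
  exact ((hf.pd i).mul_smooth contDiff_const).add (hf.mul_smooth (contDiff_gradV_half hV i))

lemma IsTest.dst (hV : ContDiff ℝ (⊤ : ℕ∞) V) (hf : IsTest f) (i : Fin d) :
    IsTest (dstar h V f i) := by
  unfold dstar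
  simp only [mul_comm (f _)]
  exact ((hf.pd i).mul_smooth contDiff_const).add (hf.mul_smooth (contDiff_gradV_half hV i))

lemma IsTest.integrable_ip (hf : IsTest f) (hg : IsTest g) :
    Integrable (fun x => conj (f x) * g x) :=
  (hg.mul_smooth hf.conj.smooth).integrable

/-- Products of two test functions with a continuous real weight are integrable. -/
lemma IsTest.integrable_re (hf : IsTest f) (hg : IsTest g) {w : (Fin d → ℝ) → ℝ}
    (hw : Continuous w) : Integrable (fun x => w x * (conj (f x) * g x).re) := by
  refine (Continuous.integrable_of_hasCompactSupport ?_ ?_)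
  · exact hw.mul (Complex.continuous_re.comp (hf.conj.smooth.continuous.mul hg.smooth.continuous))
  · exact ((hg.supp.mul_left (f := fun x => conj (f x))).comp_left Complex.zero_re).mul_left

lemma IsTest.integrable_normSq (hf : IsTest f) {w : (Fin d → ℝ) → ℝ}
    (hw : Continuous w) : Integrable (fun x => w x * Complex.normSq (f x)) := by
  have := hf.integrable_re hf hw
  simpa only [← Complex.normSq_eq_conj_mul_self, Complex.ofReal_re] using this

lemma IsTest.integrable_normSq' (hf : IsTest f) :
    Integrable (fun x => Complex.normSq (f x)) := by
  simpa using hf.integrable_normSq (w := fun _ => 1) continuous_const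

lemma ip_re (hf : IsTest f) (hg : IsTest g) :
    (ip f g).re = ∫ x, (conj (f x) * g x).re :=
  (Complex.reCLM.integral_comp_comm (hf.integrable_ip hg)).symm

lemma ip_self_re (hf : IsTest f) : (ip f f).re = ∫ x, Complex.normSq (f x) := by
  rw [ip_re hf hf]
  simp only [← Complex.normSq_eq_conj_mul_self, Complex.ofReal_re]

lemma ip_add_right {k : (Fin d → ℝ) → ℂ} (hf : IsTest f) (hg : IsTest g) (hk : IsTest k) :
    ip f (fun x => g x + k x) = ip f g + ip f k := by
  simp only [ip, mul_add]
  exact integral_add (hf.integrable_ip hg) (hf.integrable_ip hk)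

lemma ip_sum_right {F : Fin d → (Fin d → ℝ) → ℂ} (hf : IsTest f) (hF : ∀ i, IsTest (F i)) :
    ip f (fun x => ∑ i, F i x) = ∑ i, ip f (F i) := by
  simp only [ip, Finset.mul_sum]
  exact integral_finsetSum _ fun i _ => hf.integrable_ip (hF i)

lemma ip_sum_left {F : Fin d → (Fin d → ℝ) → ℂ} (hf : IsTest f) (hF : ∀ i, IsTest (F i)) :
    ip (fun x => ∑ i, F i x) f = ∑ i, ip (F i) f := by
  simp only [ip, map_sum, Finset.sum_mul]
  exact integral_finsetSum _ fun i _ => (hF i).integrable_ip hf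

lemma l2norm_sq (f : (Fin d → ℝ) → ℂ) : l2norm f ^ 2 = ∫ x, Complex.normSq (f x) :=
  Real.sq_sqrt (integral_nonneg fun _ => Complex.normSq_nonneg _)

/-- Cauchy–Schwarz for the real part of the pairing. -/
lemma ip_re_le (hf : IsTest f) (hg : IsTest g) :
    (ip f g).re ≤ l2norm f * l2norm g := by
  -- The quadratic `t ↦ ‖t f - g‖²` is nonnegative, so its discriminant is nonpositive.
  have hq : ∀ t : ℝ, 0 ≤ l2norm f ^ 2 * (t * t) + (-2 * (ip f g).re) * t + l2norm g ^ 2 := by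
    intro t
    have e : l2norm f ^ 2 * (t * t) + (-2 * (ip f g).re) * t + l2norm g ^ 2
        = ∫ x, ((t * t) * Complex.normSq (f x) + (-2 * t) * (conj (f x) * g x).re
            + Complex.normSq (g x)) := by
      have i1 := hf.integrable_normSq (w := fun _ => t * t) continuous_const
      have i2 := hf.integrable_re hg (w := fun _ => -2 * t) continuous_const
      rw [integral_add (by exact i1.add i2) hg.integrable_normSq', integral_add i1 i2,
        integral_const_mul, integral_const_mul, l2norm_sq, l2norm_sq, ip_re hf hg]
      ring
    rw [e]
    refine integral_nonneg fun x => ?_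
    have : (0 : ℝ) ≤ (t * (f x).re - (g x).re) ^ 2 + (t * (f x).im - (g x).im) ^ 2 := by positivity
    simp only [Pi.zero_apply, Complex.normSq_apply, Complex.mul_re, Complex.conj_re,
      Complex.conj_im]
    linarith
  have hd := discrim_le_zero hq
  unfold discrim at hd
  have h0 : 0 ≤ l2norm f * l2norm g := mul_nonneg (Real.sqrt_nonneg _) (Real.sqrt_nonneg _)
  nlinarith

lemma pdC_conj (hf : IsTest f) (i : Fin d) (x) :
    pdC (fun y => conj (f y)) i x = conj (pdC f i x) := by
  have h1 : HasFDerivAt f (fderiv ℝ f x) x :=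
    (hf.smooth.differentiable (by simp) x).hasFDerivAt
  have h2 := Complex.conjCLE.toContinuousLinearMap.hasFDerivAt.comp x h1
  have h3 : fderiv ℝ (fun y => conj (f y)) x = _ := h2.fderiv
  simp [pdC, h3]

lemma ip_pdC (hf : IsTest f) (hg : IsTest g) (i : Fin d) :
    ∫ x, conj (f x) * pdC g i x = - ∫ x, conj (pdC f i x) * g x := by
  have := integral_mul_fderiv_eq_neg_fderiv_mul_of_integrable (μ := (volume : Measure (Fin d → ℝ)))
    (f := fun y => conj (f y)) (g := g) (v := Pi.single i 1)
    (by
      have h1 : Integrable (fun x => pdC (fun y => conj (f y)) i x * g x) := by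
        simpa only [pdC_conj hf] using (hf.pd i).integrable_ip hg
      exact h1)
    (hf.integrable_ip (hg.pd i)) (hf.integrable_ip hg)
    (fun x _ => hf.conj.smooth.differentiable (by simp) x)
    (fun x _ => hg.smooth.differentiable (by simp) x)
  calc _ = _ := this
    _ = _ := by
      congr 1
      refine integral_congr_ae (Filter.Eventually.of_forall fun x => ?_)
      change pdC (fun y => conj (f y)) i x * g x = _
      rw [pdC_conj hf]

/-! ### The operators `D_i` and `D_i^*` -/

lemma ip_dphi (hV : ContDiff ℝ (⊤ : ℕ∞) V) (hf : IsTest f) (hg : IsTest g) (i : Fin d) :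
    ip (dphiC h V f i) g = ip f (dstar h V g i) := by
  have hA := contDiff_gradV_half hV i
  have e1 : ip (dphiC h V f i) g = (h : ℂ) * (∫ x, conj (pdC f i x) * g x)
      + ∫ x, conj (f x) * (((gradV V x i / 2 : ℝ) : ℂ) * g x) := by
    rw [← integral_const_mul, ← integral_add (((hf.pd i).integrable_ip hg).const_mul _)
      (hf.integrable_ip (hg.mul_smooth hA))]
    refine integral_congr_ae (Filter.Eventually.of_forall fun x => ?_)
    simp only [dphiC, map_add, map_mul, Complex.conj_ofReal]
    ring
  have e2 : ip f (dstar h V g i) = -(h : ℂ) * (∫ x, conj (f x) * pdC g i x)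
      + ∫ x, conj (f x) * (((gradV V x i / 2 : ℝ) : ℂ) * g x) := by
    rw [← integral_const_mul, ← integral_add ((hf.integrable_ip (hg.pd i)).const_mul _)
      (hf.integrable_ip (hg.mul_smooth hA))]
    refine integral_congr_ae (Filter.Eventually.of_forall fun x => ?_)
    simp only [dstar]
    ring
  rw [e1, e2, ip_pdC hf hg]
  ring

lemma ip_dstar (hV : ContDiff ℝ (⊤ : ℕ∞) V) (hf : IsTest f) (hg : IsTest g) (i : Fin d) :
    ip (dstar h V f i) g = ip f (dphiC h V g i) := by
  have symm : ∀ p q : (Fin d → ℝ) → ℂ, ip p q = conj (ip q p) := by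
    intro p q
    rw [ip, ip, ← integral_conj]
    refine integral_congr_ae (Filter.Eventually.of_forall fun x => ?_)
    simp [mul_comm]
  rw [symm, symm f, ip_dphi hV hg hf]

lemma hasFDerivAt_gradV_half (hV : ContDiff ℝ (⊤ : ℕ∞) V) (j : Fin d) (x : Fin d → ℝ) :
    ∃ L : (Fin d → ℝ) →L[ℝ] ℂ, HasFDerivAt (fun x => ((gradV V x j / 2 : ℝ) : ℂ)) L x ∧
      ∀ i, L (Pi.single i 1) = ((hessM V x i j / 2 : ℝ) : ℂ) := by
  have h1 : HasFDerivAt (pdR V j) (fderiv ℝ (pdR V j) x) x :=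
    ((contDiff_pdR hV j).differentiable (by simp) x).hasFDerivAt
  have h2 := Complex.ofRealCLM.hasFDerivAt.comp x (h1.const_mul (1 / 2 : ℝ))
  refine ⟨Complex.ofRealCLM ∘SL ((1 / 2 : ℝ) • fderiv ℝ (pdR V j) x), ?_, ?_⟩
  · have e : (fun x => ((gradV V x j / 2 : ℝ) : ℂ))
        = Complex.ofRealCLM ∘ fun y => 1 / 2 * pdR V j y := by
      ext1 y
      change ((pdR V j y / 2 : ℝ) : ℂ) = ((1 / 2 * pdR V j y : ℝ) : ℂ)
      congr 1
      ring
    rw [e]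
    exact h2
  · intro i
    simp [hessM, pdR]
    ring

/-- The product rule for `c∂_j f + a_j f`; with `c = ±h` it covers both `D_j` and `D_j^*`. -/
lemma pdC_twisted (hV : ContDiff ℝ (⊤ : ℕ∞) V) (hf : IsTest f) (c : ℂ) (i j : Fin d)
    (x : Fin d → ℝ) :
    pdC (fun x => c * pdC f j x + f x * ((gradV V x j / 2 : ℝ) : ℂ)) i x
      = c * pdC (pdC f j) i x + pdC f i x * ((gradV V x j / 2 : ℝ) : ℂ)
        + f x * ((hessM V x i j / 2 : ℝ) : ℂ) := by
  obtain ⟨L, hL, hLi⟩ := hasFDerivAt_gradV_half hV j x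
  have h1 : HasFDerivAt f (fderiv ℝ f x) x :=
    (hf.smooth.differentiable (by simp) x).hasFDerivAt
  have h2 : HasFDerivAt (pdC f j) (fderiv ℝ (pdC f j) x) x :=
    ((hf.pd j).smooth.differentiable (by simp) x).hasFDerivAt
  have h3 := ((h2.const_mul c).add (h1.mul hL)).fderiv
  have h4 : fderiv ℝ (fun x => c * pdC f j x + f x * ((gradV V x j / 2 : ℝ) : ℂ)) x = _ := h3
  rw [pdC, h4]
  simp only [_root_.add_apply, _root_.smul_apply, hLi, smul_eq_mul, pdC]
  ring

lemma pdC_comm (hf : IsTest f) (i j : Fin d) (x : Fin d → ℝ) :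
    pdC (pdC f j) i x = pdC (pdC f i) j x := by
  have hd : DifferentiableAt ℝ (fderiv ℝ f) x :=
    (hf.smooth.fderiv_right (m := (⊤ : ℕ∞)) le_rfl).differentiable (by simp) x
  have key : ∀ k l : Fin d, pdC (pdC f k) l x
      = fderiv ℝ (fderiv ℝ f) x (Pi.single l 1) (Pi.single k 1) := by
    intro k l
    have h1 := (hd.hasFDerivAt.clm_apply (hasFDerivAt_const (Pi.single k (1 : ℝ)) x)).fderiv
    have h2 : fderiv ℝ (pdC f k) x = _ := h1
    rw [pdC, h2]
    simp
  rw [key, key]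
  exact (hf.smooth.contDiffAt.isSymmSndFDerivAt
    (by simpa using WithTop.coe_le_coe.2 (le_top : (2 : ℕ∞) ≤ ⊤))) _ _

lemma hessM_symm (hV : ContDiff ℝ (⊤ : ℕ∞) V) (i j : Fin d) (x : Fin d → ℝ) :
    hessM V x i j = hessM V x j i := by
  have hd : DifferentiableAt ℝ (fderiv ℝ V) x :=
    (hV.fderiv_right (m := (⊤ : ℕ∞)) le_rfl).differentiable (by simp) x
  have key : ∀ k l : Fin d, hessM V x l k
      = fderiv ℝ (fderiv ℝ V) x (Pi.single l 1) (Pi.single k 1) := by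
    intro k l
    have h1 := (hd.hasFDerivAt.clm_apply (hasFDerivAt_const (Pi.single k (1 : ℝ)) x)).fderiv
    have h2 : fderiv ℝ (pdR V k) x = _ := h1
    rw [hessM, pdR, h2]
    simp
  rw [key, key]
  exact (hV.contDiffAt.isSymmSndFDerivAt
    (by simpa using WithTop.coe_le_coe.2 (le_top : (2 : ℕ∞) ≤ ⊤))) _ _

lemma dphi_comm (hV : ContDiff ℝ (⊤ : ℕ∞) V) (hf : IsTest f) (i j : Fin d) :
    dphiC h V (dphiC h V f i) j = dphiC h V (dphiC h V f j) i := by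
  ext x
  have e := fun k l => pdC_twisted hV hf (h : ℂ) k l x
  have e' : ∀ k l, pdC (dphiC h V f l) k x = _ := e
  change (h : ℂ) * pdC (dphiC h V f i) j x + dphiC h V f i x * _
    = (h : ℂ) * pdC (dphiC h V f j) i x + dphiC h V f j x * _
  rw [e', e', pdC_comm hf j i, hessM_symm hV j i]
  simp only [dphiC]
  ring

/-- The commutation relation `[D_i, D_j^*] = h ∂_i∂_jV`. -/
lemma dphi_dstar_comm (hV : ContDiff ℝ (⊤ : ℕ∞) V) (hf : IsTest f) (i j : Fin d) :
    dphiC h V (dstar h V f j) i = fun x => dstar h V (dphiC h V f i) j x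
      + ((h * hessM V x i j : ℝ) : ℂ) * f x := by
  ext x
  have e1 : pdC (dstar h V f j) i x = _ := pdC_twisted hV hf (-(h : ℂ)) i j x
  have e2 : pdC (dphiC h V f i) j x = _ := pdC_twisted hV hf (h : ℂ) j i x
  change (h : ℂ) * pdC (dstar h V f j) i x + dstar h V f j x * _
    = -(h : ℂ) * pdC (dphiC h V f i) j x + dphiC h V f i x * _ + _
  rw [e1, e2, pdC_comm hf j i, hessM_symm hV j i]
  simp only [dphiC, dstar]
  push_cast
  ring

lemma wittenC_eq (hV : ContDiff ℝ (⊤ : ℕ∞) V) (hf : IsTest f) :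
    wittenC h V f = fun x => ∑ i, dstar h V (dphiC h V f i) i x := by
  ext x
  have e : ∀ i, pdC (dphiC h V f i) i x = _ := fun i => pdC_twisted hV hf (h : ℂ) i i x
  have hdiv : divg (gradV V) x = ∑ i, hessM V x i i := rfl
  simp only [dstar, e, wittenC, lapC, hdiv, Finset.mul_sum, Finset.sum_div, Complex.ofReal_sub,
    Complex.ofReal_sum, ← Finset.sum_sub_distrib, Finset.sum_mul, ← Finset.sum_add_distrib]
  refine Finset.sum_congr rfl fun i _ => ?_
  simp only [dphiC]
  push_cast
  ring

/-! ### The energy estimates -/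

/-- `‖d_φ f‖² = ⟨Δ_φ f, f⟩ ≤ ‖Δ_φ f‖‖f‖`. -/
lemma dphi_sq (hV : ContDiff ℝ (⊤ : ℕ∞) V) (hf : IsTest f) :
    ∑ i, ∫ x, Complex.normSq (dphiC h V f i x) ≤ l2norm (wittenC h V f) * l2norm f := by
  have hw : IsTest (wittenC h V f) := by
    rw [wittenC_eq hV hf]
    exact IsTest.sum fun i => (hf.dphi hV i).dst hV i
  refine le_trans (le_of_eq ?_) (ip_re_le hw hf)
  rw [wittenC_eq hV hf, ip_sum_left hf fun i => (hf.dphi hV i).dst hV i, Complex.re_sum]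
  refine Finset.sum_congr rfl fun i _ => ?_
  rw [ip_dstar hV (hf.dphi hV i) hf, ip_self_re (hf.dphi hV i)]

lemma isTest_hess (hV : ContDiff ℝ (⊤ : ℕ∞) V) (hf : IsTest f) (i j : Fin d) :
    IsTest (fun x => ((h * hessM V x i j : ℝ) : ℂ) * f x) :=
  hf.mul_smooth (Complex.ofRealCLM.contDiff.comp (contDiff_const.mul (contDiff_hessM hV i j)))

lemma ip_hess_re (hV : ContDiff ℝ (⊤ : ℕ∞) V) (hf : IsTest f) (hg : IsTest g) (i j : Fin d) :
    (ip f (fun x => ((h * hessM V x i j : ℝ) : ℂ) * g x)).re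
      = ∫ x, h * hessM V x i j * (conj (f x) * g x).re := by
  rw [ip_re hf (isTest_hess hV hg i j)]
  refine integral_congr_ae (Filter.Eventually.of_forall fun x => ?_)
  simp only [mul_left_comm (conj (f x)), Complex.re_ofReal_mul]

lemma continuous_gradV (hV : ContDiff ℝ (⊤ : ℕ∞) V) (i : Fin d) :
    Continuous (fun x => gradV V x i) := (contDiff_pdR hV i).continuous

/-- The one-direction lower bound `∫ (a_j² - h ∂_j²V/2)|f|² ≤ ‖D_j f‖²`: the commutator relates
`‖D_j f‖²` to `‖D_j^* f‖²`, and `|D_j f|² + |D_j^* f|² = 2h²|∂_j f|² + 2a_j²|f|²` pointwise. -/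
lemma weight_le (hV : ContDiff ℝ (⊤ : ℕ∞) V) (hf : IsTest f) (j : Fin d) :
    ∫ x, ((gradV V x j / 2) ^ 2 - h * hessM V x j j / 2) * Complex.normSq (f x)
      ≤ ∫ x, Complex.normSq (dphiC h V f j x) := by
  have hD := hf.dphi (h := h) hV j
  have hS := hf.dst (h := h) hV j
  have e1 : (ip (dstar h V f j) (dstar h V f j)).re = (ip (dphiC h V f j) (dphiC h V f j)).re
      + ∫ x, h * hessM V x j j * Complex.normSq (f x) := by
    rw [ip_dstar hV hf hS, dphi_dstar_comm hV hf, ip_add_right hf (hD.dst hV j)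
      (isTest_hess hV hf j j), Complex.add_re, ip_hess_re hV hf hf, ip_dphi hV hf hD]
    simp only [← Complex.normSq_eq_conj_mul_self, Complex.ofReal_re]
  rw [ip_self_re hD, ip_self_re hS] at e1
  have c1 : Continuous (fun x => (gradV V x j / 2) ^ 2) := ((continuous_gradV hV j).div_const 2).pow 2
  have c2 : Continuous (fun x => h * hessM V x j j) :=
    continuous_const.mul (contDiff_hessM hV j j).continuous
  have i1 := hf.integrable_normSq c1
  have i2 := hf.integrable_normSq c2
  have e2 : ∫ x, ((gradV V x j / 2) ^ 2 - h * hessM V x j j / 2) * Complex.normSq (f x)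
      = (∫ x, (gradV V x j / 2) ^ 2 * Complex.normSq (f x))
        - (∫ x, h * hessM V x j j * Complex.normSq (f x)) / 2 := by
    rw [← integral_div, ← integral_sub i1 (i2.div_const 2)]
    refine integral_congr_ae (Filter.Eventually.of_forall fun x => ?_)
    ring
  have e3 : 2 * ∫ x, (gradV V x j / 2) ^ 2 * Complex.normSq (f x)
      ≤ (∫ x, Complex.normSq (dphiC h V f j x)) + ∫ x, Complex.normSq (dstar h V f j x) := by
    rw [← integral_const_mul, ← integral_add hD.integrable_normSq' hS.integrable_normSq']
    refine integral_mono (i1.const_mul 2) (hD.integrable_normSq'.add hS.integrable_normSq') ?_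
    intro x
    have : 0 ≤ (h * (pdC f j x).re) ^ 2 + (h * (pdC f j x).im) ^ 2 := by positivity
    simp only [dphiC, dstar, Complex.normSq_apply, Complex.add_re, Complex.add_im, Complex.mul_re,
      Complex.mul_im, Complex.ofReal_re, Complex.ofReal_im, Complex.neg_re, Complex.neg_im]
    nlinarith
  linarith

/-- `‖Δ_φ f‖² = ∑ ⟨D_i^*D_i f, D_j^*D_j f⟩`; each summand is integrated by parts, `D_i` is commuted
past `D_j^*`, and `D_iD_j f = D_jD_i f` turns the main term into a sum of squares. -/
lemma bochner_identity (hV : ContDiff ℝ (⊤ : ℕ∞) V) (hf : IsTest f) :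
    l2norm (wittenC h V f) ^ 2
      = ∑ i, ∑ j, ((∫ x, Complex.normSq (dphiC h V (dphiC h V f i) j x))
        + ∫ x, h * hessM V x i j * (conj (dphiC h V f i x) * dphiC h V f j x).re) := by
  have hv : ∀ i, IsTest (dphiC h V f i) := fun i => hf.dphi hV i
  have hs : ∀ i, IsTest (dstar h V (dphiC h V f i) i) := fun i => (hv i).dst hV i
  rw [l2norm_sq, wittenC_eq hV hf, ← ip_self_re (IsTest.sum hs), ip_sum_left (IsTest.sum hs) hs,
    Complex.re_sum]
  refine Finset.sum_congr rfl fun i _ => ?_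
  rw [ip_sum_right (hs i) hs, Complex.re_sum]
  refine Finset.sum_congr rfl fun j _ => ?_
  rw [ip_dstar hV (hv i) (hs j), dphi_dstar_comm hV (hv j),
    ip_add_right (hv i) (((hv j).dphi hV i).dst hV j) (isTest_hess hV (hv j) i j),
    Complex.add_re, ip_hess_re hV (hv i) (hv j), ← ip_dphi hV (hv i) ((hv j).dphi hV i),
    dphi_comm hV hf j i, ip_self_re ((hv i).dphi hV j)]

/-- The weighted estimate `∫ |∇φ|²|d_φu|² ≤ 2‖Δ_φu‖² + ‖d_φu‖²`, for `h` so small that the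
Hessian terms of the Bochner identity are absorbed. -/
lemma weighted_bound (hV : ContDiff ℝ (⊤ : ℕ∞) V) (hf : IsTest f) (h0 : 0 < h) {L : ℝ}
    (hL : ∀ x i j, |hessM V x i j| ≤ L * (1 + ∑ k, (gradV V x k / 2) ^ 2))
    (hsmall : 3 * d * L * h ≤ 1) :
    ∫ x, (∑ k, (gradV V x k / 2) ^ 2) * ∑ i, Complex.normSq (dphiC h V f i x)
      ≤ 2 * l2norm (wittenC h V f) ^ 2
        + ∑ i, ∫ x, Complex.normSq (dphiC h V f i x) := by
  have hv : ∀ i, IsTest (dphiC h V f i) := fun i => hf.dphi hV i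
  have cA : Continuous (fun x => ∑ k, (gradV V x k / 2) ^ 2) :=
    continuous_finsetSum _ fun k _ => ((continuous_gradV hV k).div_const 2).pow 2
  have cH : ∀ i j, Continuous (fun x => h * hessM V x i j) := fun i j =>
    continuous_const.mul (contDiff_hessM hV i j).continuous
  have i1 : ∀ i j, Integrable (fun x => ((gradV V x j / 2) ^ 2 - h * hessM V x j j / 2)
      * Complex.normSq (dphiC h V f i x)) := fun i j => (hv i).integrable_normSq
        ((((continuous_gradV hV j).div_const 2).pow 2).sub ((cH j j).div_const 2))
  have i2 : ∀ i j, Integrable (fun x => h * hessM V x i j *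
      (conj (dphiC h V f i x) * dphiC h V f j x).re) :=
    fun i j => (hv i).integrable_re (hv j) (cH i j)
  have iG : Integrable (fun x => ∑ i, ∑ j, (((gradV V x j / 2) ^ 2 - h * hessM V x j j / 2)
      * Complex.normSq (dphiC h V f i x) + h * hessM V x i j *
      (conj (dphiC h V f i x) * dphiC h V f j x).re)) :=
    integrable_finsetSum _ fun i _ => integrable_finsetSum _ fun j _ => (i1 i j).add (i2 i j)
  have hG : ∫ x, ∑ i, ∑ j, (((gradV V x j / 2) ^ 2 - h * hessM V x j j / 2)
      * Complex.normSq (dphiC h V f i x) + h * hessM V x i j *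
      (conj (dphiC h V f i x) * dphiC h V f j x).re) ≤ l2norm (wittenC h V f) ^ 2 := by
    rw [bochner_identity hV hf, integral_finsetSum _ fun i _ =>
      by exact integrable_finsetSum _ fun j _ => (i1 i j).add (i2 i j)]
    refine Finset.sum_le_sum fun i _ => ?_
    rw [integral_finsetSum _ fun j _ => by exact (i1 i j).add (i2 i j)]
    refine Finset.sum_le_sum fun j _ => ?_
    rw [integral_add (i1 i j) (i2 i j)]
    exact add_le_add_left (weight_le hV (hv i) j) _
  have iW : Integrable (fun x => ∑ i, Complex.normSq (dphiC h V f i x)) :=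
    integrable_finsetSum _ fun i _ => (hv i).integrable_normSq'
  have iAW : Integrable (fun x => (∑ k, (gradV V x k / 2) ^ 2)
      * ∑ i, Complex.normSq (dphiC h V f i x)) := by
    simp only [Finset.mul_sum _ _ (∑ k, _)]
    exact integrable_finsetSum _ fun i _ => (hv i).integrable_normSq cA
  have main : ∫ x, (∑ k, (gradV V x k / 2) ^ 2) * ∑ i, Complex.normSq (dphiC h V f i x)
      ≤ ∫ x, (2 * (∑ i, ∑ j, (((gradV V x j / 2) ^ 2 - h * hessM V x j j / 2)
      * Complex.normSq (dphiC h V f i x) + h * hessM V x i j *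
      (conj (dphiC h V f i x) * dphiC h V f j x).re)) +
        ∑ i, Complex.normSq (dphiC h V f i x)) := by
    refine integral_mono iAW ((iG.const_mul 2).add iW) ?_
    intro x
    dsimp only
    set A := ∑ k, (gradV V x k / 2) ^ 2 with hA
    set W := ∑ i, Complex.normSq (dphiC h V f i x) with hW
    have hA0 : 0 ≤ A := Finset.sum_nonneg fun _ _ => sq_nonneg _
    have hW0 : 0 ≤ W := Finset.sum_nonneg fun _ _ => Complex.normSq_nonneg _
    have low : ∀ i j, (gradV V x j / 2) ^ 2 * Complex.normSq (dphiC h V f i x)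
        - h * (L * (1 + A)) * (Complex.normSq (dphiC h V f i x)
          + Complex.normSq (dphiC h V f j x) / 2) ≤
        ((gradV V x j / 2) ^ 2 - h * hessM V x j j / 2)
      * Complex.normSq (dphiC h V f i x) + h * hessM V x i j *
      (conj (dphiC h V f i x) * dphiC h V f j x).re := by
      intro i j
      set p := dphiC h V f i x
      set q := dphiC h V f j x
      have hp := Complex.normSq_nonneg p
      have a1 : h * hessM V x j j * Complex.normSq p ≤ h * (L * (1 + A)) * Complex.normSq p := by
        gcongr
        exact (le_abs_self _).trans (hL x j j)
      have a2 : |(conj p * q).re| ≤ (Complex.normSq p + Complex.normSq q) / 2 := by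
        rw [abs_le]
        simp only [Complex.normSq_apply, Complex.mul_re, Complex.conj_re, Complex.conj_im]
        constructor <;>
          nlinarith [sq_nonneg (p.re + q.re), sq_nonneg (p.im + q.im),
            sq_nonneg (p.re - q.re), sq_nonneg (p.im - q.im)]
      have a3 : |hessM V x i j * (conj p * q).re|
          ≤ (L * (1 + A)) * ((Complex.normSq p + Complex.normSq q) / 2) := by
        rw [abs_mul]
        exact mul_le_mul (hL x i j) a2 (abs_nonneg _) ((abs_nonneg _).trans (hL x i j))
      have a4 := mul_le_mul_of_nonneg_left (neg_le_of_abs_le a3) h0.le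
      linarith
    have low2 := Finset.sum_le_sum fun i (_ : i ∈ Finset.univ) =>
      Finset.sum_le_sum fun j (_ : j ∈ Finset.univ) => low i j
    have e : ∑ i, ∑ j, ((gradV V x j / 2) ^ 2 * Complex.normSq (dphiC h V f i x)
        - h * (L * (1 + A)) * (Complex.normSq (dphiC h V f i x)
          + Complex.normSq (dphiC h V f j x) / 2))
        = A * W - h * (L * (1 + A)) * (3 / 2 * d * W) := by
      simp only [Finset.sum_sub_distrib, ← Finset.mul_sum, ← Finset.sum_mul,
        Finset.sum_add_distrib, ← Finset.sum_div, Finset.sum_const, Finset.card_univ,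
        Fintype.card_fin, nsmul_eq_mul, ← hA, ← hW]
      ring
    rw [e] at low2
    have : 0 ≤ (1 - 3 * d * L * h) * ((1 + A) * W) :=
      mul_nonneg (by linarith) (by positivity)
    linarith
  rw [integral_add (iG.const_mul 2) iW, integral_const_mul,
    integral_finsetSum _ fun i _ => (hv i).integrable_normSq'] at main
  linarith

/-- `|∑ β_i z_i|² ≤ |β|²|z|²` for real `β` and complex `z`. -/
lemma normSq_sum_le (β : Fin d → ℝ) (z : Fin d → ℂ) :
    Complex.normSq (∑ i, (β i : ℂ) * z i) ≤ (∑ i, β i ^ 2) * ∑ i, Complex.normSq (z i) := by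
  have h1 := Finset.sum_mul_sq_le_sq_mul_sq Finset.univ β fun i => (z i).re
  have h2 := Finset.sum_mul_sq_le_sq_mul_sq Finset.univ β fun i => (z i).im
  have e : ∑ i, Complex.normSq (z i) = ∑ i, (z i).re ^ 2 + ∑ i, (z i).im ^ 2 := by
    rw [← Finset.sum_add_distrib]
    exact Finset.sum_congr rfl fun i _ => by rw [Complex.normSq_apply]; ring
  rw [e, Complex.normSq_apply, Complex.re_sum, Complex.im_sum]
  simp only [Complex.re_ofReal_mul, Complex.im_ofReal_mul]
  linarith

/-- The Hessian bound, extended over `K` by compactness. -/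
lemma hess_bound (hV : ContDiff ℝ (⊤ : ℕ∞) V) {Cc : ℝ} (hCc : 0 < Cc) {K : Set (Fin d → ℝ)}
    (hK : IsCompact K)
    (hhess : ∀ x ∉ K, ∀ i j, |hessM V x i j| ≤ Cc * (enorm2 (gradV V x)) ^ 2) :
    ∃ L > 0, ∀ x i j, |hessM V x i j| ≤ L * (1 + ∑ k, (gradV V x k / 2) ^ 2) := by
  have cS : Continuous (fun x => ∑ i, ∑ j, |hessM V x i j|) :=
    continuous_finsetSum _ fun i _ => continuous_finsetSum _ fun j _ =>
      (contDiff_hessM hV i j).continuous.abs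
  obtain ⟨M, hM⟩ := hK.exists_bound_of_continuousOn cS.continuousOn
  refine ⟨|M| + 4 * Cc, by positivity, fun x i j => ?_⟩
  have hA0 : 0 ≤ ∑ k, (gradV V x k / 2) ^ 2 := Finset.sum_nonneg fun _ _ => sq_nonneg _
  by_cases hx : x ∈ K
  · have h1 : |hessM V x i j| ≤ ∑ i, ∑ j, |hessM V x i j| :=
      (Finset.single_le_sum (f := fun j => |hessM V x i j|) (fun _ _ => abs_nonneg _)
        (Finset.mem_univ j)).trans
      (Finset.single_le_sum (f := fun i => ∑ j, |hessM V x i j|)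
        (fun _ _ => Finset.sum_nonneg fun _ _ => abs_nonneg _) (Finset.mem_univ i))
    have h2 := (le_abs_self _).trans (hM x hx)
    nlinarith [le_abs_self M, abs_nonneg M, mul_nonneg (abs_nonneg M) hA0, mul_nonneg hCc.le hA0]
  · have h1 := hhess x hx i j
    have h2 : enorm2 (gradV V x) ^ 2 = 4 * ∑ k, (gradV V x k / 2) ^ 2 := by
      rw [enorm2, Real.sq_sqrt (Finset.sum_nonneg fun _ _ => sq_nonneg _), Finset.mul_sum]
      exact Finset.sum_congr rfl fun i _ => by ring
    rw [h2] at h1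
    nlinarith [abs_nonneg M, mul_nonneg (abs_nonneg M) hA0]

/-- The growth bound `|b + hν|² ≤ Cc²(4 + 16|∇φ|²)` for `h ∈ [0,1]`. -/
lemma drift_bound {β n g : Fin d → ℝ} {Cc : ℝ} (h0 : 0 ≤ h) (h1 : h ≤ 1)
    (hb : enorm2 β + enorm2 n ≤ Cc * (1 + enorm2 g)) :
    ∑ i, (β i + h * n i) ^ 2 ≤ Cc ^ 2 * (4 + 16 * ∑ k, (g k / 2) ^ 2) := by
  have sq : ∀ w : Fin d → ℝ, enorm2 w ^ 2 = ∑ i, w i ^ 2 := fun w =>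
    Real.sq_sqrt (Finset.sum_nonneg fun _ _ => sq_nonneg _)
  have p1 : 0 ≤ enorm2 β := Real.sqrt_nonneg _
  have p2 : 0 ≤ enorm2 n := Real.sqrt_nonneg _
  have e1 : ∑ i, (β i + h * n i) ^ 2 ≤ 2 * enorm2 β ^ 2 + 2 * enorm2 n ^ 2 := by
    rw [sq, sq, Finset.mul_sum, Finset.mul_sum, ← Finset.sum_add_distrib]
    refine Finset.sum_le_sum fun i _ => ?_
    have : h ^ 2 * n i ^ 2 ≤ 1 * n i ^ 2 := by
      gcongr
      nlinarith
    nlinarith [sq_nonneg (β i - h * n i)]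
  have e2 : ∑ k, (g k / 2) ^ 2 = enorm2 g ^ 2 / 4 := by
    rw [sq, Finset.sum_div]
    exact Finset.sum_congr rfl fun i _ => by ring
  rw [e2]
  have e3 : (enorm2 β + enorm2 n) ^ 2 ≤ (Cc * (1 + enorm2 g)) ^ 2 := by
    gcongr
  have e4 : 0 ≤ Cc ^ 2 * (1 - enorm2 g) ^ 2 := by positivity
  nlinarith [mul_nonneg p1 p2]

end

/-- The transport term `⟨b_h, d_φ u⟩` is controlled by the Witten Laplacian:
`‖⟨b_h, d_φu⟩‖² ≤ C'‖Δ_φu‖(‖Δ_φu‖ + ‖u‖)` for all test functions `u`. -/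
theorem transport_term_controlled_by_witten
    (d : ℕ) (hd : 1 ≤ d)
    (V : (Fin d → ℝ) → ℝ) (b ν : (Fin d → ℝ) → Fin d → ℝ)
    (hV : ContDiff ℝ (⊤ : ℕ∞) V) (hb : ContDiff ℝ (⊤ : ℕ∞) b) (hν : ContDiff ℝ (⊤ : ℕ∞) ν)
    (Cc : ℝ) (hCc : 0 < Cc) (K : Set (Fin d → ℝ)) (hK : IsCompact K)
    (hVlb : ∀ x, -Cc ≤ V x)
    (hgrad : ∀ x ∉ K, 1 / Cc ≤ enorm2 (gradV V x))
    (hhess : ∀ x ∉ K, ∀ i j, |hessM V x i j| ≤ Cc * (enorm2 (gradV V x)) ^ 2)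
    (hbν : ∀ x, enorm2 (b x) + enorm2 (ν x) ≤ Cc * (1 + enorm2 (gradV V x))) :
    ∃ C' > (0:ℝ), ∃ h₀ : ℝ, 0 < h₀ ∧ h₀ ≤ 1 ∧
      ∀ h : ℝ, 0 < h → h ≤ h₀ →
      ∀ u : (Fin d → ℝ) → ℂ, ContDiff ℝ (⊤ : ℕ∞) u → HasCompactSupport u →
        (l2norm (fun x => ∑ i, ((b x i + h * ν x i : ℝ) : ℂ) * dphiC h V u i x)) ^ 2 ≤
          C' * l2norm (wittenC h V u) * (l2norm (wittenC h V u) + l2norm u) := by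

  obtain ⟨L, hL0, hL⟩ := hess_bound hV hCc hK hhess
  have hd0 : (0 : ℝ) < d := by exact_mod_cast hd
  have h3 : 0 < 3 * (d : ℝ) * L := by positivity
  refine ⟨32 * Cc ^ 2, by positivity, min 1 (1 / (3 * d * L)), lt_min one_pos (by positivity),
    min_le_left _ _, ?_⟩
  intro h h0 hle u hu hus
  have hf : IsTest u := ⟨hu, hus⟩
  have hsmall : 3 * d * L * h ≤ 1 := by
    have := hle.trans (min_le_right _ _)
    rw [le_div_iff₀ h3] at this
    linarith
  have hv : ∀ i, IsTest (dphiC h V u i) := fun i => hf.dphi hV i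
  have B1 := dphi_sq (h := h) hV hf
  have B2 := weighted_bound hV hf h0 hL hsmall
  have cA : Continuous (fun x => ∑ k, (gradV V x k / 2) ^ 2) :=
    continuous_finsetSum _ fun k _ => ((continuous_gradV hV k).div_const 2).pow 2
  have iW : Integrable (fun x => ∑ i, Complex.normSq (dphiC h V u i x)) :=
    integrable_finsetSum _ fun i _ => (hv i).integrable_normSq'
  have iAW : Integrable (fun x => (∑ k, (gradV V x k / 2) ^ 2)
      * ∑ i, Complex.normSq (dphiC h V u i x)) := by
    simp only [Finset.mul_sum _ _ (∑ k, _)]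
    exact integrable_finsetSum _ fun i _ => (hv i).integrable_normSq cA
  have B3 : (l2norm (fun x => ∑ i, ((b x i + h * ν x i : ℝ) : ℂ) * dphiC h V u i x)) ^ 2
      ≤ ∫ x, (4 * Cc ^ 2 * (∑ i, Complex.normSq (dphiC h V u i x))
        + 16 * Cc ^ 2 * ((∑ k, (gradV V x k / 2) ^ 2)
          * ∑ i, Complex.normSq (dphiC h V u i x))) := by
    rw [l2norm_sq]
    refine integral_mono_of_nonneg (Filter.Eventually.of_forall fun x => Complex.normSq_nonneg _)
      ((iW.const_mul _).add (iAW.const_mul _)) (Filter.Eventually.of_forall fun x => ?_)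
    have W0 : 0 ≤ ∑ i, Complex.normSq (dphiC h V u i x) :=
      Finset.sum_nonneg fun _ _ => Complex.normSq_nonneg _
    refine (normSq_sum_le (fun i => b x i + h * ν x i) fun i => dphiC h V u i x).trans ?_
    refine (mul_le_mul_of_nonneg_right
      (drift_bound h0.le (hle.trans (min_le_left _ _)) (hbν x)) W0).trans (le_of_eq ?_)
    ring
  rw [integral_add (iW.const_mul _) (iAW.const_mul _), integral_const_mul, integral_const_mul,
    integral_finsetSum _ fun i _ => (hv i).integrable_normSq'] at B3
  have C1 := mul_le_mul_of_nonneg_left B1 (by positivity : 0 ≤ 20 * Cc ^ 2)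
  have C2 := mul_le_mul_of_nonneg_left B2 (by positivity : 0 ≤ 16 * Cc ^ 2)
  have C3 : 0 ≤ 12 * Cc ^ 2 * (l2norm (wittenC h V u) * l2norm u) :=
    mul_nonneg (by positivity) (mul_nonneg (Real.sqrt_nonneg _) (Real.sqrt_nonneg _))
  linarith
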